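/- The 26-point fully symmetric rule with weight 4π/21 at each of the six points (±1, 0, 0), (0, ±1, 0), (0, 0, ±1); weight 16π/105 at each of the twelve points whose coordinates are a permutation of (±1/√2, ±1/√2, 0); and weight 9π/70 at each of the eight points (±1/√3, ±1/√3, ±1/√3), is a cubature rule of degree 7 for U₃: for every polynomial p in three variables of total degree at most 7, ∫_{U₃} p dσ equals the corresponding weighted sum of the values of p at these 26 points. -/

import Mathlib

open MeasureTheory MvPolynomial

/-!
Every sign change of a coordinate preserves both the rule and the sphere, so monomials with an odd
exponent contribute `0` to both sides and it remains to compare the finitely many monomials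
`x ^ (2 * a) * y ^ (2 * b) * z ^ (2 * c)` with `a + b + c ≤ 3`.

The integrals of these over the sphere come from evaluating the integral over the whole space of
the monomial against the Gaussian `exp (-‖x‖ ^ 2)` twice: in Cartesian coordinates it is a product
of one-dimensional moments, and in polar coordinates it is the wanted integral times a radial
moment.
-/

section PolarCoordinates

variable {E F : Type*} [NormedAddCommGroup F] [NormedSpace ℝ F]

theorem integral_volumeIoiPow (n : ℕ) (g : ℝ → F) :
    ∫ r : Set.Ioi (0 : ℝ), g r ∂Measure.volumeIoiPow n = ∫ r in Set.Ioi (0 : ℝ), r ^ n • g r := by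
  simp only [Measure.volumeIoiPow, ENNReal.ofReal]
  rw [integral_withDensity_eq_integral_smul (measurable_subtype_coe.pow_const n).real_toNNReal,
    integral_subtype_comap measurableSet_Ioi fun r : ℝ ↦ (r ^ n).toNNReal • g r]
  refine setIntegral_congr_fun measurableSet_Ioi fun r hr ↦ ?_
  rw [NNReal.smul_def, Real.coe_toNNReal _ (pow_nonneg (Set.mem_Ioi.1 hr).le n)]

variable [NormedAddCommGroup E] [NormedSpace ℝ E] [FiniteDimensional ℝ E] [Nontrivial E]
  [MeasurableSpace E] [BorelSpace E]

theorem integral_homogeneous_smul_fun_norm (μ : Measure E) [μ.IsAddHaarMeasure] {f : E → ℝ} {k : ℕ}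
    (hf : ∀ ⦃r : ℝ⦄, 0 < r → ∀ x, f (r • x) = r ^ k * f x) (g : ℝ → F) :
    ∫ x, f x • g ‖x‖ ∂μ =
      (∫ v : Metric.sphere (0 : E) 1, f v ∂μ.toSphere) •
        ∫ r in Set.Ioi (0 : ℝ), r ^ (Module.finrank ℝ E - 1 + k) • g r := by
  have hpolar (x : ({0}ᶜ : Set E)) : f x = f (‖x.1‖⁻¹ • x.1) * ‖x.1‖ ^ k := by
    have hx : 0 < ‖x.1‖ := norm_pos_iff.2 x.2
    rw [hf (inv_pos.2 hx), mul_right_comm, ← mul_pow, inv_mul_cancel₀ hx.ne', one_pow, one_mul]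
  calc
    _ = ∫ x : ({0}ᶜ : Set E), f x • g ‖x.1‖ ∂(μ.comap (↑)) := by
      rw [integral_subtype_comap (measurableSet_singleton _).compl fun x ↦ f x • g ‖x‖,
        restrict_compl_singleton]
    _ = ∫ z, f z.1 • (z.2.1 ^ k • g z.2)
          ∂μ.toSphere.prod (.volumeIoiPow (Module.finrank ℝ E - 1)) := by
      rw [← μ.measurePreserving_homeomorphUnitSphereProd.integral_comp
        (Homeomorph.measurableEmbedding _)]
      simp only [homeomorphUnitSphereProd_apply_fst_coe, homeomorphUnitSphereProd_apply_snd_coe,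
        smul_smul, ← hpolar]
    _ = _ := by
      rw [integral_prod_smul (fun v : Metric.sphere (0 : E) 1 ↦ f v)
        (fun r : Set.Ioi (0 : ℝ) ↦ r.1 ^ k • g r), integral_volumeIoiPow _ fun r ↦ r ^ k • g r]
      simp only [smul_smul, pow_add]

end PolarCoordinates

section GaussianMoments

theorem integral_Ioi_pow_mul_exp_neg_sq (n : ℕ) :
    ∫ x in Set.Ioi (0 : ℝ), x ^ n * Real.exp (-x ^ 2) = Real.Gamma ((n + 1) / 2) / 2 := by
  have h := integral_rpow_mul_exp_neg_rpow two_pos (neg_one_lt_zero.trans_le n.cast_nonneg)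
  simpa [div_eq_inv_mul] using h

theorem integral_pow_mul_exp_neg_sq_of_odd {n : ℕ} (hn : Odd n) :
    ∫ x : ℝ, x ^ n * Real.exp (-x ^ 2) = 0 := by
  have h := integral_neg_eq_self (fun x : ℝ ↦ x ^ n * Real.exp (-x ^ 2)) volume
  simp only [hn.neg_pow, neg_sq, neg_mul, integral_neg] at h
  linarith

theorem integral_pow_two_mul_mul_exp_neg_sq (n : ℕ) :
    ∫ x : ℝ, x ^ (2 * n) * Real.exp (-x ^ 2) = Real.Gamma (n + 1 / 2) := by
  have h := integral_comp_abs (f := fun x : ℝ ↦ x ^ (2 * n) * Real.exp (-x ^ 2))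
  simp only [(even_two_mul n).pow_abs, sq_abs, integral_Ioi_pow_mul_exp_neg_sq] at h
  rw [h, mul_div_cancel₀ _ two_ne_zero]
  push_cast
  ring_nf

variable {ι : Type*} [Fintype ι]

theorem integral_prod_pow_mul_exp_neg_norm_sq (m : ι → ℕ) :
    ∫ x : EuclideanSpace ℝ ι, (∏ i, x i ^ m i) * Real.exp (-‖x‖ ^ 2) =
      ∏ i, ∫ x : ℝ, x ^ m i * Real.exp (-x ^ 2) := by
  rw [← integral_fintype_prod_volume_eq_prod fun i (x : ℝ) ↦ x ^ m i * Real.exp (-x ^ 2),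
    ← (PiLp.volume_preserving_toLp ι).integral_comp
      (MeasurableEquiv.toLp 2 (ι → ℝ)).measurableEmbedding]
  simp only [EuclideanSpace.norm_sq_eq, Finset.prod_mul_distrib, ← Real.exp_sum,
    Finset.sum_neg_distrib, Real.norm_eq_abs, sq_abs]

end GaussianMoments

section SphereIntegral

variable {ι : Type*} [Fintype ι]

theorem integral_sphere_prod_pow_mul_Gamma [Nonempty ι] (m : ι → ℕ) :
    (∫ v : Metric.sphere (0 : EuclideanSpace ℝ ι) 1, ∏ i, v.1 i ^ m i
        ∂(volume : Measure (EuclideanSpace ℝ ι)).toSphere) *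
      (Real.Gamma ((∑ i, (m i : ℝ) + Fintype.card ι) / 2) / 2) =
      ∏ i, ∫ x : ℝ, x ^ m i * Real.exp (-x ^ 2) := by
  have hhom ⦃r : ℝ⦄ (_ : 0 < r) (x : EuclideanSpace ℝ ι) :
      ∏ i, (r • x) i ^ m i = r ^ (∑ i, m i) * ∏ i, x i ^ m i := by
    simp only [PiLp.smul_apply, smul_eq_mul, mul_pow, Finset.prod_mul_distrib,
      Finset.prod_pow_eq_pow_sum]
  have h := integral_homogeneous_smul_fun_norm volume
    (f := fun x : EuclideanSpace ℝ ι ↦ ∏ i, x i ^ m i) hhom fun r ↦ Real.exp (-r ^ 2)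
  simp only [smul_eq_mul, integral_Ioi_pow_mul_exp_neg_sq, integral_prod_pow_mul_exp_neg_norm_sq,
    finrank_euclideanSpace] at h
  rw [h]
  congr 4
  push_cast [Nat.cast_sub (Fintype.card_pos (α := ι))]
  ring

/-- The linear functional integrating a polynomial over the unit sphere against the surface
measure, realised as `Measure.toSphere` of the Lebesgue measure. -/
noncomputable def sphereIntegral (ι : Type*) [Fintype ι] : MvPolynomial ι ℝ →ₗ[ℝ] ℝ where
  toFun p := ∫ v : Metric.sphere (0 : EuclideanSpace ℝ ι) 1,
    eval (fun i ↦ (v : EuclideanSpace ℝ ι) i) p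
      ∂(volume : Measure (EuclideanSpace ℝ ι)).toSphere
  map_add' p q := by
    have hint (p : MvPolynomial ι ℝ) : Integrable
        (fun v : Metric.sphere (0 : EuclideanSpace ℝ ι) 1 ↦ eval (fun i ↦ v.1 i) p)
        (volume : Measure (EuclideanSpace ℝ ι)).toSphere :=
      ((continuous_eval p).comp (by fun_prop)).integrable_of_hasCompactSupport
        (.of_compactSpace _)
    simp only [map_add, integral_add (hint p) (hint q)]
  map_smul' c p := by
    simp only [smul_eval, integral_const_mul, RingHom.id_apply, smul_eq_mul]

theorem sphereIntegral_monomial (m : ι →₀ ℕ) (c : ℝ) :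
    sphereIntegral ι (monomial m c) =
      c * ∫ v : Metric.sphere (0 : EuclideanSpace ℝ ι) 1, ∏ i, v.1 i ^ m i
        ∂(volume : Measure (EuclideanSpace ℝ ι)).toSphere := by
  simp only [sphereIntegral, LinearMap.coe_mk, AddHom.coe_mk, eval_monomial, Finsupp.prod_pow,
    integral_const_mul]

theorem sphereIntegral_monomial_of_odd {m : ι →₀ ℕ} {i : ι} (hi : Odd (m i)) (c : ℝ) :
    sphereIntegral ι (monomial m c) = 0 := by
  have : Nonempty ι := ⟨i⟩
  have h := integral_sphere_prod_pow_mul_Gamma m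
  rw [Finset.prod_eq_zero (Finset.mem_univ i) (integral_pow_mul_exp_neg_sq_of_odd hi)] at h
  have hΓ : 0 < Real.Gamma ((∑ i, (m i : ℝ) + Fintype.card ι) / 2) :=
    Real.Gamma_pos_of_pos (by positivity)
  rw [sphereIntegral_monomial, (mul_eq_zero.1 h).resolve_right (half_pos hΓ).ne', mul_zero]

theorem sphereIntegral_monomial_two_nsmul [Nonempty ι] (b : ι →₀ ℕ) (c : ℝ) :
    sphereIntegral ι (monomial (2 • b) c) =
      c * (2 * (∏ i, Real.Gamma (b i + 1 / 2)) /
        Real.Gamma (∑ i, (b i : ℝ) + Fintype.card ι / 2)) := by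
  have hΓ : 0 < Real.Gamma (∑ i, (b i : ℝ) + Fintype.card ι / 2) :=
    Real.Gamma_pos_of_pos (by positivity)
  have h := integral_sphere_prod_pow_mul_Gamma fun i ↦ 2 * b i
  simp only [integral_pow_two_mul_mul_exp_neg_sq, Nat.cast_mul, Nat.cast_ofNat, ← Finset.mul_sum,
    add_div, mul_div_cancel_left₀ _ (two_ne_zero' ℝ)] at h
  simp only [sphereIntegral_monomial, Finsupp.smul_apply, smul_eq_mul]
  rw [← h, mul_left_comm 2, mul_div_cancel₀ _ two_ne_zero, mul_div_cancel_right₀ _ hΓ.ne']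

open scoped Nat in
theorem sphereIntegral_fin_three_monomial_two_nsmul (b : Fin 3 →₀ ℕ) (c : ℝ) :
    sphereIntegral (Fin 3) (monomial (2 • b) c) =
      c * (4 * Real.pi * (∏ i, ((2 * b i - 1)‼ : ℝ)) / (2 * ∑ i, b i + 1)‼) := by
  have hcard : (∑ i, (b i : ℝ)) + Fintype.card (Fin 3) / 2 = (∑ i, b i + 1 : ℕ) + 1 / 2 := by
    rw [Fintype.card_fin]
    push_cast
    ring
  have hsqrt : √Real.pi ^ 3 = √Real.pi * Real.pi := by
    rw [pow_succ, Real.sq_sqrt Real.pi_pos.le, mul_comm]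
  rw [sphereIntegral_monomial_two_nsmul, hcard]
  simp only [Real.Gamma_nat_add_half, Finset.prod_div_distrib, Finset.prod_mul_distrib,
    Finset.prod_pow_eq_pow_sum, Finset.prod_const, Finset.card_univ, Fintype.card_fin, hsqrt,
    show 2 * (∑ i, b i + 1) - 1 = 2 * ∑ i, b i + 1 by omega, pow_succ]
  field_simp
  norm_num

end SphereIntegral

section SignAverage

variable {ι : Type*} [Fintype ι] [DecidableEq ι]

/-- The mean of the values of a polynomial at the points `(± x i)ᵢ`, over all choices of signs.
Each point of the orbit is counted with its multiplicity, so coordinates equal to `0` need no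
special treatment. -/
noncomputable def signAverage (x : ι → ℝ) : MvPolynomial ι ℝ →ₗ[ℝ] ℝ :=
  (2 ^ Fintype.card ι : ℝ)⁻¹ • ∑ s : ι → ℤˣ, (aeval fun i ↦ s i • x i).toLinearMap

theorem signAverage_apply (x : ι → ℝ) (p : MvPolynomial ι ℝ) :
    signAverage x p = (2 ^ Fintype.card ι)⁻¹ * ∑ s : ι → ℤˣ, eval (fun i ↦ s i • x i) p := by
  simp [signAverage, LinearMap.sum_apply]

theorem signAverage_monomial (x : ι → ℝ) (m : ι →₀ ℕ) (c : ℝ) :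
    signAverage x (monomial m c) = c * ∏ i, (x i ^ m i + (-x i) ^ m i) / 2 := by
  have hsum : ∑ s : ι → ℤˣ, ∏ i, (s i • x i) ^ m i = ∏ i, (x i ^ m i + (-x i) ^ m i) := by
    rw [← Fintype.piFinset_univ, Finset.sum_prod_piFinset Finset.univ fun i s ↦ (s • x i) ^ m i]
    simp [UnitsInt.univ, Units.neg_smul]
  simp only [signAverage_apply, eval_monomial, Finsupp.prod_pow, ← Finset.mul_sum, hsum,
    Finset.prod_div_distrib, Finset.prod_const, Finset.card_univ]
  ring

theorem signAverage_monomial_of_odd (x : ι → ℝ) {m : ι →₀ ℕ} {i : ι} (hi : Odd (m i)) (c : ℝ) :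
    signAverage x (monomial m c) = 0 := by
  rw [signAverage_monomial, Finset.prod_eq_zero (Finset.mem_univ i), mul_zero]
  rw [hi.neg_pow, add_neg_cancel, zero_div]

theorem signAverage_monomial_two_nsmul (x : ι → ℝ) (b : ι →₀ ℕ) (c : ℝ) :
    signAverage x (monomial (2 • b) c) = c * ∏ i, (x i ^ 2) ^ b i := by
  simp [signAverage_monomial, pow_mul]

theorem sum_pi_fin_succ {n : ℕ} {α M : Type*} [Fintype α] [AddCommMonoid M]
    (f : (Fin (n + 1) → α) → M) :
    ∑ x, f x = ∑ a, ∑ y : Fin n → α, f (Matrix.vecCons a y) := by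
  rw [← (Fin.consEquiv fun _ ↦ α).sum_comp, Fintype.sum_prod_type]
  rfl

theorem signAverage_fin_three (x y z : ℝ) (p : MvPolynomial (Fin 3) ℝ) :
    signAverage ![x, y, z] p =
      (eval ![x, y, z] p + eval ![x, y, -z] p + eval ![x, -y, z] p + eval ![x, -y, -z] p +
        eval ![-x, y, z] p + eval ![-x, y, -z] p + eval ![-x, -y, z] p +
        eval ![-x, -y, -z] p) / 8 := by
  have hvec (s : Fin 3 → ℤˣ) :
      (fun i ↦ s i • ![x, y, z] i) = ![s 0 • x, s 1 • y, s 2 • z] := by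
    ext i; fin_cases i <;> rfl
  simp only [signAverage_apply, hvec, sum_pi_fin_succ, UnitsInt.univ,
    Finset.sum_pair (units_ne_neg_self (1 : ℤˣ)), Fintype.sum_unique, Matrix.cons_val_zero,
    Matrix.cons_val_one, Matrix.cons_val, one_smul, Units.neg_smul, Fintype.card_fin]
  ring

end SignAverage

theorem linearMap_eq_of_totalDegree_le {σ R M : Type*} [CommSemiring R] [AddCommMonoid M]
    [Module R M] {f g : MvPolynomial σ R →ₗ[R] M} {d : ℕ}
    (h : ∀ (m : σ →₀ ℕ) (c : R), m.degree ≤ d → f (monomial m c) = g (monomial m c))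
    {p : MvPolynomial σ R} (hp : p.totalDegree ≤ d) : f p = g p := by
  rw [p.as_sum, map_sum, map_sum]
  exact Finset.sum_congr rfl fun m hm ↦ h m _ ((le_totalDegree hm).trans hp)

theorem exists_odd_or_eq_two_nsmul {ι : Type*} (m : ι →₀ ℕ) :
    (∃ i, Odd (m i)) ∨ ∃ b : ι →₀ ℕ, m = 2 • b := by
  by_cases h : ∃ i, Odd (m i)
  · exact .inl h
  · simp only [not_exists, Nat.not_odd_iff_even] at h
    refine .inr ⟨m.mapRange (· / 2) rfl, Finsupp.ext fun i ↦ ?_⟩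
    simpa using (Nat.two_mul_div_two_of_even (h i)).symm

section Rule

/-- The fully symmetric rule supported on the orbits of `(1, 0, 0)`, `(0, β, β)` and `(ε, ε, ε)`,
with one `signAverage` for each orbit under sign changes. The weight of such an average is that of
one node times the number `2`, `4` or `8` of nodes in the orbit. -/
noncomputable def rule26 (β ε : ℝ) : MvPolynomial (Fin 3) ℝ →ₗ[ℝ] ℝ :=
  (8 * Real.pi / 21) • (signAverage ![1, 0, 0] + signAverage ![0, 1, 0] + signAverage ![0, 0, 1]) +
  (64 * Real.pi / 105) •
    (signAverage ![0, β, β] + signAverage ![β, 0, β] + signAverage ![β, β, 0]) +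
  (36 * Real.pi / 35) • signAverage ![ε, ε, ε]

variable {β ε : ℝ}

theorem rule26_monomial_of_odd {m : Fin 3 →₀ ℕ} {i : Fin 3} (hi : Odd (m i)) (c : ℝ) :
    rule26 β ε (monomial m c) = 0 := by
  simp [rule26, signAverage_monomial_of_odd _ hi]

theorem rule26_monomial_two_nsmul (hβ : β ^ 2 = 1 / 2) (hε : ε ^ 2 = 1 / 3) (b : Fin 3 →₀ ℕ)
    (c : ℝ) :
    rule26 β ε (monomial (2 • b) c) = c * (Real.pi * (
      8 / 21 * (0 ^ b 1 * 0 ^ b 2 + 0 ^ b 0 * 0 ^ b 2 + 0 ^ b 0 * 0 ^ b 1) +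
      64 / 105 * (0 ^ b 0 * (1 / 2) ^ (b 1 + b 2) + 0 ^ b 1 * (1 / 2) ^ (b 0 + b 2) +
        0 ^ b 2 * (1 / 2) ^ (b 0 + b 1)) +
      36 / 35 * (1 / 3) ^ (b 0 + b 1 + b 2))) := by
  simp only [rule26, LinearMap.add_apply, LinearMap.smul_apply, signAverage_monomial_two_nsmul,
    Fin.prod_univ_three, Matrix.cons_val_zero, Matrix.cons_val_one, Matrix.cons_val, hβ, hε,
    one_pow, zero_pow two_ne_zero, smul_eq_mul]
  ring

theorem rule26_monomial_eq_sphereIntegral (hβ : β ^ 2 = 1 / 2) (hε : ε ^ 2 = 1 / 3)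
    {m : Fin 3 →₀ ℕ} (hm : m.degree ≤ 7) (c : ℝ) :
    rule26 β ε (monomial m c) = sphereIntegral (Fin 3) (monomial m c) := by
  obtain ⟨i, hi⟩ | ⟨b, rfl⟩ := exists_odd_or_eq_two_nsmul m
  · rw [rule26_monomial_of_odd hi, sphereIntegral_monomial_of_odd hi]
  · rw [rule26_monomial_two_nsmul hβ hε, sphereIntegral_fin_three_monomial_two_nsmul]
    have hb : b 0 + b 1 + b 2 ≤ 3 := by
      simp only [Finsupp.degree_eq_sum, Finsupp.smul_apply, smul_eq_mul,
        Fin.sum_univ_three] at hm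
      omega
    simp only [Fin.sum_univ_three, Fin.prod_univ_three]
    generalize b 0 = i, b 1 = j, b 2 = k at hb ⊢
    have hi : i ≤ 3 := by omega
    have hj : j ≤ 3 - i := by omega
    have hk : k ≤ 3 - i - j := by omega
    congr 1
    interval_cases i <;> interval_cases j <;> interval_cases k <;>
      norm_num [Nat.doubleFactorial] <;> ring

end Rule

/-- The 26-point fully symmetric rule with weight `4π/21` at the six points
`(±1,0,0), (0,±1,0), (0,0,±1)`; weight `16π/105` at the twelve points whose coordinates are a
permutation of `(±1/√2, ±1/√2, 0)`; and weight `9π/70` at the eight points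
`(±1/√3, ±1/√3, ±1/√3)`, is a cubature rule of degree 7 for `U₃`. -/
theorem degree7_rule_26pt (β ε : ℝ) (hβ : β = 1 / Real.sqrt 2) (hε : ε = 1 / Real.sqrt 3)
    (p : MvPolynomial (Fin 3) ℝ) (hp : p.totalDegree ≤ 7) :
    ∫ v : Metric.sphere (0 : EuclideanSpace ℝ (Fin 3)) 1,
        eval (fun i => (v : EuclideanSpace ℝ (Fin 3)) i) p
      ∂((volume : Measure (EuclideanSpace ℝ (Fin 3))).toSphere) =
      (4 * Real.pi / 21) *
        (eval ![1, 0, 0] p +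
          eval ![-1, 0, 0] p +
          eval ![0, 1, 0] p +
          eval ![0, -1, 0] p +
          eval ![0, 0, 1] p +
          eval ![0, 0, -1] p) +
      (16 * Real.pi / 105) *
        (eval ![0, β, β] p +
          eval ![0, β, -β] p +
          eval ![0, -β, β] p +
          eval ![0, -β, -β] p +
          eval ![β, 0, β] p +
          eval ![β, 0, -β] p +
          eval ![-β, 0, β] p +
          eval ![-β, 0, -β] p +
          eval ![β, β, 0] p +
          eval ![β, -β, 0] p +
          eval ![-β, β, 0] p +
          eval ![-β, -β, 0] p) +
      (9 * Real.pi / 70) *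
        (eval ![ε, ε, ε] p +
          eval ![ε, ε, -ε] p +
          eval ![ε, -ε, ε] p +
          eval ![ε, -ε, -ε] p +
          eval ![-ε, ε, ε] p +
          eval ![-ε, ε, -ε] p +
          eval ![-ε, -ε, ε] p +
          eval ![-ε, -ε, -ε] p) := by
  have hβ2 : β ^ 2 = 1 / 2 := by rw [hβ, div_pow, Real.sq_sqrt zero_le_two, one_pow]
  have hε2 : ε ^ 2 = 1 / 3 := by rw [hε, div_pow, Real.sq_sqrt zero_le_three, one_pow]
  change sphereIntegral (Fin 3) p = _
  rw [← linearMap_eq_of_totalDegree_le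
    (fun m c hm ↦ rule26_monomial_eq_sphereIntegral hβ2 hε2 hm c) hp]
  simp only [rule26, LinearMap.add_apply, LinearMap.smul_apply, smul_eq_mul,
    signAverage_fin_three, neg_zero]
  ring
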